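/- There exists an odd unimodular lattice L in dimension 44 having minimum norm 4 with σ(L) = 20. -/

import Mathlib

open scoped RealInnerProductSpace

noncomputable section

/-- The norm `(x, x)` of a vector `x ∈ ℝⁿ` (squared Euclidean length). -/
def normOf {n : ℕ} (x : EuclideanSpace ℝ (Fin n)) : ℝ := ⟪x, x⟫

/-- The dual `L* = {x ∈ ℝⁿ : (x,y) ∈ ℤ for all y ∈ L}` of a set of vectors. -/
def dualSet {n : ℕ} (L : Set (EuclideanSpace ℝ (Fin n))) : Set (EuclideanSpace ℝ (Fin n)) :=
  {x | ∀ y ∈ L, ∃ m : ℤ, ⟪x, y⟫ = (m : ℝ)}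

/-- `L` is a unimodular lattice: `L = L*`. -/
def IsUnimodularLattice {n : ℕ} (L : Set (EuclideanSpace ℝ (Fin n))) : Prop :=
  L = dualSet L

/-- `L` is odd: some vector of `L` has odd (integral) norm. -/
def IsOddLattice {n : ℕ} (L : Set (EuclideanSpace ℝ (Fin n))) : Prop :=
  ∃ x ∈ L, ∃ m : ℤ, Odd m ∧ normOf x = (m : ℝ)

/-- The even sublattice `L₀ = {x ∈ L : (x,x) even}`. -/
def evenSublattice {n : ℕ} (L : Set (EuclideanSpace ℝ (Fin n))) :
    Set (EuclideanSpace ℝ (Fin n)) :=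
  {x | x ∈ L ∧ ∃ m : ℤ, normOf x = 2 * (m : ℝ)}

/-- The shadow `S(L) = L₀* \ L`. -/
def shadow {n : ℕ} (L : Set (EuclideanSpace ℝ (Fin n))) : Set (EuclideanSpace ℝ (Fin n)) :=
  dualSet (evenSublattice L) \ L

/-- `L` has minimum norm `r`: `r` is the least norm among nonzero vectors of `L`. -/
def HasMinNorm {n : ℕ} (L : Set (EuclideanSpace ℝ (Fin n))) (r : ℝ) : Prop :=
  IsLeast {s : ℝ | ∃ x ∈ L, x ≠ 0 ∧ normOf x = s} r

/-- The shadow `S(L)` has minimum norm `r`. -/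
def HasShadowMinNorm {n : ℕ} (L : Set (EuclideanSpace ℝ (Fin n))) (r : ℝ) : Prop :=
  IsLeast {s : ℝ | ∃ x ∈ shadow L, normOf x = s} r

/-- `σ(L) = r`, i.e. `4 · min(S(L)) = r`. -/
def HasSigma {n : ℕ} (L : Set (EuclideanSpace ℝ (Fin n))) (r : ℝ) : Prop :=
  ∃ s : ℝ, HasShadowMinNorm L s ∧ r = 4 * s

/-- The number of vectors of norm `r` in `L`; when `L` has minimum norm `r`,
this is the kissing number of `L`. -/
def numVecsOfNorm {n : ℕ} (L : Set (EuclideanSpace ℝ (Fin n))) (r : ℝ) : ℕ :=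
  Set.ncard {x ∈ L | normOf x = r}

/-!
Let `C₁` be a binary code of length 44 spanned by the rows of an integral 0-1 matrix `G` with
`G Gᵀ ≡ 0 mod 4`. The rows of `G` and twice the dual of `C₁` span a self-dual code over `ℤ/4`, and
Construction A turns it into a unimodular lattice `L = Λ / 2`, where `Λ ⊆ ℤ⁴⁴`.

A vector of `Λ` is nonzero modulo 2 and has norm at least the minimum weight of `C₁`, or it is twice
a vector which modulo 2 lies in the dual of `C₁`. So if `C₁` has minimum weight at least 16 and its
dual has minimum weight at least 4, then `L` has minimum norm 4. If moreover the rows of `G` have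
norms divisible by 8 and sums divisible by 4, the all-ones vector is characteristic for `L`, hence
the shadow is `(1 + Λ) / 2` and its norms are congruent to `44 / 4 = 11` modulo 2. When no word of
`C₁` has weight above 28, the vectors of `1 + Λ` have norm at least 16, so the norms in the shadow
are odd and at least 4. A row of `G` of weight 24 gives a shadow vector of norm 5.
-/

open Matrix

section Shadow

variable {n : ℕ} {L : Set (EuclideanSpace ℝ (Fin n))} {w x y : EuclideanSpace ℝ (Fin n)}

namespace IsUnimodularLattice

theorem mem_iff (hL : IsUnimodularLattice L) :
    x ∈ L ↔ ∀ y ∈ L, ∃ m : ℤ, ⟪x, y⟫ = (m : ℝ) :=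
  Set.ext_iff.1 hL x

theorem add_mem (hL : IsUnimodularLattice L) (hx : x ∈ L) (hy : y ∈ L) : x + y ∈ L := by
  refine hL.mem_iff.2 fun v hv => ?_
  obtain ⟨a, ha⟩ := hL.mem_iff.1 hx v hv
  obtain ⟨b, hb⟩ := hL.mem_iff.1 hy v hv
  exact ⟨a + b, by rw [inner_add_left, ha, hb]; push_cast; ring⟩

theorem sub_mem (hL : IsUnimodularLattice L) (hx : x ∈ L) (hy : y ∈ L) : x - y ∈ L := by
  refine hL.mem_iff.2 fun v hv => ?_
  obtain ⟨a, ha⟩ := hL.mem_iff.1 hx v hv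
  obtain ⟨b, hb⟩ := hL.mem_iff.1 hy v hv
  exact ⟨a - b, by rw [inner_sub_left, ha, hb]; push_cast; ring⟩

end IsUnimodularLattice

/-- `w` is a characteristic vector of `L`: `(w, x) ≡ (x, x) mod 2` for every `x ∈ L`. Halving such a
vector moves the lattice onto its shadow. -/
def IsCharacteristic (L : Set (EuclideanSpace ℝ (Fin n))) (w : EuclideanSpace ℝ (Fin n)) : Prop :=
  ∀ x ∈ L, ∃ k : ℤ, ⟪w, x⟫ = normOf x + 2 * (k : ℝ)

namespace IsCharacteristic

theorem mem_evenSublattice_iff (hw : IsCharacteristic L w) :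
    x ∈ evenSublattice L ↔ x ∈ L ∧ ∃ m : ℤ, ⟪w, x⟫ = 2 * (m : ℝ) := by
  refine and_congr_right fun hx => ?_
  obtain ⟨k, hk⟩ := hw x hx
  constructor
  · rintro ⟨m, hm⟩
    exact ⟨m + k, by rw [hk, hm]; push_cast; ring⟩
  · rintro ⟨m, hm⟩
    exact ⟨m - k, by push_cast; linarith⟩

theorem exists_inner_eq_intCast (hw : IsCharacteristic L w) (hL : IsUnimodularLattice L)
    (hx : x ∈ L) : ∃ c : ℤ, ⟪w, x⟫ = (c : ℝ) := by
  obtain ⟨k, hk⟩ := hw x hx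
  obtain ⟨m, hm⟩ := hL.mem_iff.1 hx x hx
  exact ⟨m + 2 * k, by rw [hk, normOf, hm]; push_cast; ring⟩

theorem mem_shadow_of_sub_half_smul_mem (hw : IsCharacteristic L w) (hL : IsUnimodularLattice L)
    (hodd : IsOddLattice L) (hy : y - (1 / 2 : ℝ) • w ∈ L) : y ∈ shadow L := by
  refine ⟨fun x hx => ?_, fun hyL => ?_⟩
  · obtain ⟨hxL, m, hm⟩ := hw.mem_evenSublattice_iff.1 hx
    obtain ⟨k, hk⟩ := hL.mem_iff.1 hy x hxL
    rw [inner_sub_left, real_inner_smul_left, hm] at hk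
    exact ⟨k + m, by push_cast; linarith⟩
  · obtain ⟨v, hv, m, hm_odd, hm⟩ := hodd
    obtain ⟨k, hk⟩ := hw v hv
    obtain ⟨l, hl⟩ := hL.mem_iff.1 (hL.sub_mem hyL hy) v hv
    rw [sub_sub_cancel, real_inner_smul_left, hk, hm] at hl
    have hl' : m + 2 * k = 2 * l := by
      rify
      linarith
    rw [Int.odd_iff] at hm_odd
    omega

theorem sub_half_smul_mem_of_mem_shadow (hw : IsCharacteristic L w) (hL : IsUnimodularLattice L)
    (hy : y ∈ shadow L) : y - (1 / 2 : ℝ) • w ∈ L := by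
  obtain ⟨hy_dual, hyL⟩ := hy
  have inner_int {x} (hx : x ∈ L) (c : ℤ) (hc : ⟪w, x⟫ = 2 * (c : ℝ)) :
      ∃ m : ℤ, ⟪y, x⟫ = (m : ℝ) :=
    hy_dual x (hw.mem_evenSublattice_iff.2 ⟨hx, c, hc⟩)
  obtain ⟨x₀, hx₀, hyx₀⟩ : ∃ x₀ ∈ L, ¬∃ m : ℤ, ⟪y, x₀⟫ = (m : ℝ) := by
    by_contra! h
    exact hyL (hL.mem_iff.2 h)
  obtain ⟨c₀, hc₀⟩ := hw.exists_inner_eq_intCast hL hx₀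
  have hc₀_odd : Odd c₀ := by
    rw [← Int.not_even_iff_odd]
    rintro ⟨d, rfl⟩
    exact hyx₀ (inner_int hx₀ d (by rw [hc₀]; push_cast; ring))
  obtain ⟨p, hp⟩ := inner_int (hL.add_mem hx₀ hx₀) c₀ (by rw [inner_add_right, hc₀]; ring)
  rw [inner_add_right] at hp
  have hp_odd : Odd p := by
    rw [← Int.not_even_iff_odd]
    rintro ⟨d, rfl⟩
    exact hyx₀ ⟨d, by push_cast at hp; linarith⟩
  refine hL.mem_iff.2 fun x hx => ?_
  obtain ⟨c, hc⟩ := hw.exists_inner_eq_intCast hL hx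
  rw [inner_sub_left, real_inner_smul_left, hc]
  rcases Int.even_or_odd' c with ⟨d, rfl | rfl⟩
  · obtain ⟨m, hm⟩ := inner_int hx d (by rw [hc]; push_cast; ring)
    exact ⟨m - d, by rw [hm]; push_cast; ring⟩
  · obtain ⟨d₀, rfl⟩ := hc₀_odd
    obtain ⟨q, rfl⟩ := hp_odd
    obtain ⟨m, hm⟩ := inner_int (hL.sub_mem hx hx₀) (d - d₀)
      (by rw [inner_sub_right, hc, hc₀]; push_cast; ring)
    rw [inner_sub_right] at hm
    exact ⟨m + q - d, by push_cast at hp ⊢; linarith⟩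

theorem mem_shadow_iff (hw : IsCharacteristic L w) (hL : IsUnimodularLattice L)
    (hodd : IsOddLattice L) : y ∈ shadow L ↔ y - (1 / 2 : ℝ) • w ∈ L :=
  ⟨hw.sub_half_smul_mem_of_mem_shadow hL, hw.mem_shadow_of_sub_half_smul_mem hL hodd⟩

theorem exists_normOf_eq_of_mem_shadow (hw : IsCharacteristic L w) (hL : IsUnimodularLattice L)
    (hy : y ∈ shadow L) : ∃ k : ℤ, normOf y = normOf w / 4 + 2 * (k : ℝ) := by
  have hx := hw.sub_half_smul_mem_of_mem_shadow hL hy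
  set x := y - (1 / 2 : ℝ) • w
  obtain ⟨k, hk⟩ := hw x hx
  obtain ⟨m, hm⟩ := hL.mem_iff.1 hx x hx
  refine ⟨m + k, ?_⟩
  have hy_eq : y = x + (1 / 2 : ℝ) • w := (sub_add_cancel _ _).symm
  rw [normOf, hm] at hk
  rw [hy_eq, normOf, normOf, real_inner_add_add_self, real_inner_smul_right, real_inner_smul_left,
    real_inner_smul_right, real_inner_comm w x, hk, hm]
  push_cast
  ring

end IsCharacteristic

end Shadow

section ConstructionA

variable {n m : ℕ} {Λ : Set (Fin n → ℤ)}

/-- The map `z ↦ z / √m` from `ℤⁿ` to `ℝⁿ`, which divides inner products by `m`. -/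
def scaledVector (m : ℕ) : (Fin n → ℤ) →+ EuclideanSpace ℝ (Fin n) where
  toFun z := WithLp.toLp 2 fun i => (z i : ℝ) / √m
  map_zero' := by ext i; simp
  map_add' z z' := by ext i; simp [add_div]

theorem scaledVector_apply (z : Fin n → ℤ) (i : Fin n) :
    scaledVector m z i = (z i : ℝ) / √m :=
  rfl

theorem inner_scaledVector (z z' : Fin n → ℤ) :
    ⟪scaledVector m z, scaledVector m z'⟫ = ((z ⬝ᵥ z' : ℤ) : ℝ) / m := by
  simp only [PiLp.inner_apply, scaledVector_apply, dotProduct, Int.cast_sum, Int.cast_mul,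
    Finset.sum_div]
  refine Finset.sum_congr rfl fun i _ => ?_
  rw [RCLike.inner_apply, conj_trivial, div_mul_div_comm, Real.mul_self_sqrt m.cast_nonneg,
    mul_comm]

theorem normOf_scaledVector (z : Fin n → ℤ) :
    normOf (scaledVector m z) = ((z ⬝ᵥ z : ℤ) : ℝ) / m :=
  inner_scaledVector z z

/-- Construction A: the set `Λ / √m`, where `Λ ⊆ ℤⁿ` plays the role of the preimage of a code over
`ℤ/m`. -/
def constructionA (m : ℕ) (Λ : Set (Fin n → ℤ)) : Set (EuclideanSpace ℝ (Fin n)) :=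
  scaledVector m '' Λ

/-- `Λ ⊆ ℤⁿ` is the preimage of a self-dual code over `ℤ/m`; the inclusion `mℤⁿ ⊆ Λ` is a
consequence of the equivalence. -/
def IsSelfDualMod {ι : Type*} [Fintype ι] (m : ℕ) (Λ : Set (ι → ℤ)) : Prop :=
  ∀ z, z ∈ Λ ↔ ∀ z' ∈ Λ, (m : ℤ) ∣ z ⬝ᵥ z'

theorem IsSelfDualMod.neg_mem {ι : Type*} [Fintype ι] {m : ℕ} {Λ : Set (ι → ℤ)}
    (hΛ : IsSelfDualMod m Λ) {z : ι → ℤ} (hz : z ∈ Λ) : -z ∈ Λ :=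
  (hΛ _).2 fun z' hz' => by
    rw [neg_dotProduct, dvd_neg]
    exact (hΛ z).1 hz z' hz'

theorem IsSelfDualMod.single_mem (hΛ : IsSelfDualMod m Λ) (i : Fin n) :
    Pi.single i (m : ℤ) ∈ Λ :=
  (hΛ _).2 fun z' _ => by rw [single_dotProduct]; exact dvd_mul_right _ _

variable [NeZero m]

theorem exists_inner_scaledVector_eq_intCast_iff (z z' : Fin n → ℤ) :
    (∃ k : ℤ, ⟪scaledVector m z, scaledVector m z'⟫ = (k : ℝ)) ↔ (m : ℤ) ∣ z ⬝ᵥ z' := by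
  have hm : (m : ℝ) ≠ 0 := NeZero.ne _
  refine exists_congr fun k => ?_
  rw [inner_scaledVector, div_eq_iff hm, mul_comm]
  exact_mod_cast Iff.rfl

theorem IsSelfDualMod.mem_range_scaledVector (hΛ : IsSelfDualMod m Λ)
    {x : EuclideanSpace ℝ (Fin n)} (hx : x ∈ dualSet (constructionA m Λ)) :
    x ∈ Set.range (scaledVector m) := by
  have coord_int (i : Fin n) : ∃ k : ℤ, x i * √m = (k : ℝ) := by
    obtain ⟨k, hk⟩ := hx _ ⟨_, hΛ.single_mem i, rfl⟩
    refine ⟨k, ?_⟩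
    rw [← hk, PiLp.inner_apply, Finset.sum_eq_single i]
    · simp [scaledVector_apply, Real.div_sqrt, mul_comm]
    · intro j _ hj
      simp [scaledVector_apply, hj]
    · simp
  choose z hz using coord_int
  refine ⟨z, ?_⟩
  have hm : √(m : ℝ) ≠ 0 := Real.sqrt_ne_zero'.2 (Nat.cast_pos.2 (NeZero.pos m))
  ext i
  rw [scaledVector_apply, ← hz, mul_div_cancel_right₀ _ hm]

theorem IsSelfDualMod.isUnimodularLattice_constructionA (hΛ : IsSelfDualMod m Λ) :
    IsUnimodularLattice (constructionA m Λ) := by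
  refine Set.Subset.antisymm ?_ fun x hx => ?_
  · rintro _ ⟨z, hz, rfl⟩ _ ⟨z', hz', rfl⟩
    exact (exists_inner_scaledVector_eq_intCast_iff z z').2 ((hΛ z).1 hz z' hz')
  · obtain ⟨z, rfl⟩ := hΛ.mem_range_scaledVector hx
    exact ⟨z, (hΛ z).2 fun z' hz' =>
      (exists_inner_scaledVector_eq_intCast_iff z z').1 (hx _ ⟨z', hz', rfl⟩), rfl⟩

theorem IsSelfDualMod.hasMinNorm_constructionA [NeZero n] (hΛ : IsSelfDualMod m Λ)
    (hmin : ∀ z ∈ Λ, z ≠ 0 → (m : ℤ) ^ 2 ≤ z ⬝ᵥ z) : HasMinNorm (constructionA m Λ) m := by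
  have hm : (0 : ℝ) < m := Nat.cast_pos.2 (NeZero.pos m)
  constructor
  · have hnorm : normOf (scaledVector m (Pi.single (0 : Fin n) (m : ℤ))) = m := by
      rw [normOf_scaledVector, single_dotProduct, Pi.single_eq_same]
      push_cast
      field
    refine ⟨_, ⟨_, hΛ.single_mem 0, rfl⟩, fun h => hm.ne' ?_, hnorm⟩
    rw [← hnorm, h, normOf, inner_zero_left]
  · rintro _ ⟨_, ⟨z, hz, rfl⟩, hz_ne, rfl⟩
    rw [normOf_scaledVector, le_div_iff₀ hm, ← sq]
    exact_mod_cast hmin z hz fun h => hz_ne (by rw [h, map_zero])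

theorem isCharacteristic_scaledVector {s : Fin n → ℤ}
    (hs : ∀ z ∈ Λ, (2 * m : ℤ) ∣ z ⬝ᵥ z - 2 * (s ⬝ᵥ z)) :
    IsCharacteristic (constructionA m Λ) (scaledVector m (2 • s)) := by
  rintro _ ⟨z, hz, rfl⟩
  obtain ⟨k, hk⟩ := hs z hz
  have hm : (m : ℝ) ≠ 0 := NeZero.ne _
  refine ⟨-k, ?_⟩
  rw [inner_scaledVector, normOf_scaledVector, smul_dotProduct, nsmul_eq_mul, eq_add_of_sub_eq hk]
  push_cast
  field_simp
  ring

theorem mem_shadow_constructionA_iff (hΛ : IsSelfDualMod m Λ) {s : Fin n → ℤ}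
    (hs : ∀ z ∈ Λ, (2 * m : ℤ) ∣ z ⬝ᵥ z - 2 * (s ⬝ᵥ z))
    (hodd : IsOddLattice (constructionA m Λ)) {y : EuclideanSpace ℝ (Fin n)} :
    y ∈ shadow (constructionA m Λ) ↔ ∃ z, z - s ∈ Λ ∧ scaledVector m z = y := by
  have half_smul : (1 / 2 : ℝ) • scaledVector m (2 • s) = scaledVector m s := by
    rw [map_nsmul]
    module
  rw [(isCharacteristic_scaledVector hs).mem_shadow_iff hΛ.isUnimodularLattice_constructionA hodd,
    half_smul]
  constructor
  · rintro ⟨z, hz, hzy⟩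
    exact ⟨z + s, by rwa [add_sub_cancel_right], by rw [map_add, hzy, sub_add_cancel]⟩
  · rintro ⟨z, hz, rfl⟩
    exact ⟨z - s, hz, map_sub _ _ _⟩

end ConstructionA

section CodeModSq

variable {ι κ : Type*} [Fintype ι] [Fintype κ] {p : ℕ} {G : Matrix κ ι ℤ} {z : ι → ℤ}

theorem exists_vecMul_eq_of_forall_mulVec_eq_zero {K : Type*} [Field K] (A : Matrix κ ι K)
    {x : ι → K} (hx : ∀ v, A *ᵥ v = 0 → x ⬝ᵥ v = 0) : ∃ a, a ᵥ* A = x := by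
  classical
  have hker : ⨅ i, (dotProductBilin K K (A i)).ker ≤ (dotProductBilin K K x).ker := by
    intro v hv
    rw [Submodule.mem_iInf] at hv
    exact hx v (funext hv)
  obtain ⟨a, ha⟩ := (Submodule.mem_span_range_iff_exists_fun K).1
    (mem_span_of_iInf_ker_le_ker hker)
  refine ⟨a, dotProduct_eq _ _ fun v => ?_⟩
  rw [← dotProduct_mulVec]
  simpa [dotProduct, mulVec] using LinearMap.congr_fun ha v

/-- The preimage in `ℤ^ι` of the code over `ℤ/p²` generated by the rows of `G` and by `p` times the
dual of the code which those rows generate over `ℤ/p`. -/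
def codeModSq (p : ℕ) (G : Matrix κ ι ℤ) : Set (ι → ℤ) :=
  {z | ∃ a u, (∀ i, (p : ℤ) ∣ (G *ᵥ u) i) ∧ a ᵥ* G + (p : ℤ) • u = z}

theorem row_mem_codeModSq (p : ℕ) (G : Matrix κ ι ℤ) (i : κ) : G i ∈ codeModSq p G := by
  classical
  exact ⟨Pi.single i 1, 0, by simp, by simp; rfl⟩

theorem smul_mem_codeModSq {u : ι → ℤ} (hu : ∀ i, (p : ℤ) ∣ (G *ᵥ u) i) :
    (p : ℤ) • u ∈ codeModSq p G :=
  ⟨0, u, hu, by rw [zero_vecMul, zero_add]⟩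

theorem dvd_dotProduct {m : ℤ} {a b : ι → ℤ} (hb : ∀ i, m ∣ b i) : m ∣ a ⬝ᵥ b :=
  Finset.dvd_sum fun i _ => (hb i).mul_left _

theorem sq_dvd_mulVec_iff [NeZero p] (hG : ∀ i j, (p : ℤ) ^ 2 ∣ (G * Gᵀ) i j) (a : κ → ℤ)
    (u : ι → ℤ) (i : κ) :
    (p : ℤ) ^ 2 ∣ (G *ᵥ (a ᵥ* G + (p : ℤ) • u)) i ↔ (p : ℤ) ∣ (G *ᵥ u) i := by
  have hp : (p : ℤ) ≠ 0 := NeZero.ne _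
  have hrow : (p : ℤ) ^ 2 ∣ (G *ᵥ a ᵥ* G) i := by
    rw [← mulVec_transpose, mulVec_mulVec, mulVec, dotProduct_comm]
    exact dvd_dotProduct (hG i)
  rw [mulVec_add, Pi.add_apply, dvd_add_right hrow, mulVec_smul, Pi.smul_apply, smul_eq_mul, sq,
    mul_dvd_mul_iff_left hp]

theorem sq_dvd_mulVec_of_mem_codeModSq [NeZero p] (hG : ∀ i j, (p : ℤ) ^ 2 ∣ (G * Gᵀ) i j)
    (hz : z ∈ codeModSq p G) (i : κ) : (p : ℤ) ^ 2 ∣ (G *ᵥ z) i := by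
  obtain ⟨a, u, hu, rfl⟩ := hz
  exact (sq_dvd_mulVec_iff hG a u i).2 (hu i)

theorem exists_vecMul_add_smul_eq [Fact p.Prime]
    (hz : ∀ u, (∀ i, (p : ℤ) ∣ (G *ᵥ u) i) → (p : ℤ) ∣ z ⬝ᵥ u) :
    ∃ a u, a ᵥ* G + (p : ℤ) • u = z := by
  let f := Int.castRingHom (ZMod p)
  have hf : Function.Surjective f := ZMod.intCast_surjective
  have hker (v : ι → ZMod p) (hv : G.map f *ᵥ v = 0) : (f ∘ z) ⬝ᵥ v = 0 := by
    obtain ⟨u, rfl⟩ := hf.comp_left v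
    rw [← RingHom.map_dotProduct]
    refine (ZMod.intCast_zmod_eq_zero_iff_dvd _ _).2 (hz u fun i => ?_)
    rw [← ZMod.intCast_zmod_eq_zero_iff_dvd]
    exact (RingHom.map_mulVec f G u i).trans (congrFun hv i)
  obtain ⟨a', ha'⟩ := exists_vecMul_eq_of_forall_mulVec_eq_zero (G.map f) hker
  obtain ⟨a, rfl⟩ := hf.comp_left a'
  have hdvd (k : ι) : (p : ℤ) ∣ z k - (a ᵥ* G) k := by
    rw [← ZMod.intCast_eq_intCast_iff_dvd_sub]
    exact (RingHom.map_vecMul f G a k).trans (congrFun ha' k)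
  choose u hu using hdvd
  exact ⟨a, u, funext fun k => by rw [Pi.add_apply, Pi.smul_apply, smul_eq_mul, ← hu]; ring⟩

theorem isSelfDualMod_codeModSq [Fact p.Prime] (hG : ∀ i j, (p : ℤ) ^ 2 ∣ (G * Gᵀ) i j) :
    IsSelfDualMod (p ^ 2) (codeModSq p G) := by
  have hp : (p : ℤ) ≠ 0 := NeZero.ne _
  intro z
  push_cast
  constructor
  · rintro ⟨a, u, hu, rfl⟩ z' hz'
    rw [add_dotProduct, ← dotProduct_mulVec]
    refine dvd_add (dvd_dotProduct (sq_dvd_mulVec_of_mem_codeModSq hG hz')) ?_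
    obtain ⟨a', u', -, rfl⟩ := hz'
    rw [smul_dotProduct, dotProduct_add, dotProduct_smul, dotProduct_comm u, ← dotProduct_mulVec,
      smul_eq_mul, smul_eq_mul, sq]
    exact mul_dvd_mul_left _ (dvd_add (dvd_dotProduct hu) (dvd_mul_right _ _))
  · intro hz
    obtain ⟨a, u, rfl⟩ := exists_vecMul_add_smul_eq (p := p) (G := G) (z := z) fun u hu => by
      have := hz _ (smul_mem_codeModSq hu)
      rwa [dotProduct_smul, smul_eq_mul, sq, mul_dvd_mul_iff_left hp] at this
    refine ⟨a, u, fun i => (sq_dvd_mulVec_iff hG a u i).1 ?_, rfl⟩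
    rw [mulVec, dotProduct_comm]
    exact hz _ (row_mem_codeModSq p G i)

theorem two_mul_dvd_sum_sum {α : Type*} {m : ℤ} {f : α → α → ℤ} (hsymm : ∀ i j, f i j = f j i)
    (hf : ∀ i j, m ∣ f i j) (hdiag : ∀ i, 2 * m ∣ f i i) (s : Finset α) :
    2 * m ∣ ∑ i ∈ s, ∑ j ∈ s, f i j := by
  classical
  induction s using Finset.induction_on with
  | empty => simp
  | insert i s hi ih =>
    simp only [Finset.sum_insert hi, Finset.sum_add_distrib, hsymm _ i]
    have hcross : 2 * m ∣ 2 * ∑ j ∈ s, f i j :=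
      mul_dvd_mul_left 2 (Finset.dvd_sum fun j _ => hf i j)
    rw [← add_assoc, add_assoc (f i i), ← two_mul]
    exact dvd_add (dvd_add (hdiag i) hcross) ih

theorem two_mul_dvd_dotProduct_mulVec_self {m : ℤ} {S : Matrix κ κ ℤ} (hS : S.IsSymm)
    (hdvd : ∀ i j, m ∣ S i j) (hdiag : ∀ i, 2 * m ∣ S i i) (a : κ → ℤ) :
    2 * m ∣ a ⬝ᵥ S *ᵥ a := by
  simp only [dotProduct, mulVec, Finset.mul_sum]
  refine two_mul_dvd_sum_sum (fun i j => ?_) (fun i j => ((hdvd i j).mul_right _).mul_left _)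
    (fun i => ((hdiag i).mul_right _).mul_left _) _
  rw [hS.apply i j]
  ring

theorem even_dotProduct_self_sub_one_dotProduct (u : ι → ℤ) : Even (u ⬝ᵥ u - 1 ⬝ᵥ u) := by
  rw [← sub_dotProduct]
  refine Finset.even_sum _ fun i _ => ?_
  rw [mul_comm]
  exact Int.even_mul_pred_self _

theorem eight_dvd_dotProduct_self_sub (hG : ∀ i j, 4 ∣ (G * Gᵀ) i j)
    (hdiag : ∀ i, 8 ∣ (G * Gᵀ) i i) (hsum : ∀ i, 4 ∣ (G *ᵥ 1) i) (hz : z ∈ codeModSq 2 G) :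
    8 ∣ z ⬝ᵥ z - 2 * (1 ⬝ᵥ z) := by
  obtain ⟨a, u, hu, rfl⟩ := hz
  have hsymm : (G * Gᵀ).IsSymm := by rw [IsSymm, transpose_mul, transpose_transpose]
  obtain ⟨q, hq⟩ : 8 ∣ a ⬝ᵥ (G * Gᵀ) *ᵥ a :=
    two_mul_dvd_dotProduct_mulVec_self (m := 4) hsymm hG hdiag a
  obtain ⟨r, hr⟩ := dvd_dotProduct (a := a) hu
  obtain ⟨s, hs⟩ := dvd_dotProduct (a := a) hsum
  obtain ⟨t, ht⟩ := (even_dotProduct_self_sub_one_dotProduct u).two_dvd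
  have hnorm : a ᵥ* G ⬝ᵥ a ᵥ* G = 8 * q := by
    rw [← hq, ← mulVec_mulVec, mulVec_transpose, dotProduct_mulVec]
  rw [dotProduct_mulVec] at hr hs
  refine ⟨q + r + t - s, ?_⟩
  simp only [add_dotProduct, dotProduct_add, smul_dotProduct, dotProduct_smul, smul_eq_mul,
    dotProduct_comm u (a ᵥ* G), dotProduct_comm 1 (a ᵥ* G), hnorm, hr, hs]
  push_cast
  linear_combination 4 * ht

end CodeModSq

section MinimumNorm

variable {ι κ : Type*} [Fintype κ] {p : ℕ} {G : Matrix κ ι ℤ} {z : ι → ℤ}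

theorem intCast_comp_eq_zero_iff :
    (Int.cast ∘ z : ι → ZMod p) = 0 ↔ ∃ u, z = (p : ℤ) • u := by
  simp only [funext_iff, Function.comp_apply, Pi.zero_apply, ZMod.intCast_zmod_eq_zero_iff_dvd,
    Pi.smul_apply, smul_eq_mul]
  exact Classical.skolem

theorem intCast_comp_vecMul (p : ℕ) (a : κ → ℤ) (G : Matrix κ ι ℤ) :
    (Int.cast ∘ (a ᵥ* G) : ι → ZMod p) = (Int.cast ∘ a) ᵥ* G.map Int.cast :=
  funext (RingHom.map_vecMul (Int.castRingHom (ZMod p)) G a)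

variable [Fintype ι]

theorem hammingNorm_intCast_le_dotProduct_self (p : ℕ) (z : ι → ℤ) :
    (hammingNorm (Int.cast ∘ z : ι → ZMod p) : ℤ) ≤ z ⬝ᵥ z := by
  rw [hammingNorm, Finset.card_filter, Nat.cast_sum]
  refine Finset.sum_le_sum fun i _ => ?_
  split_ifs with hi
  · have hzi : z i ≠ 0 := fun h => hi (by simp [h])
    exact_mod_cast Int.add_one_le_of_lt (mul_self_pos.2 hzi)
  · exact_mod_cast mul_self_nonneg (z i)

theorem exists_intCast_comp_eq_vecMul (hz : z ∈ codeModSq p G) :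
    ∃ a : κ → ZMod p, (Int.cast ∘ z : ι → ZMod p) = a ᵥ* G.map Int.cast := by
  obtain ⟨a, u, -, rfl⟩ := hz
  refine ⟨Int.cast ∘ a, ?_⟩
  rw [← intCast_comp_vecMul]
  ext i
  simp

theorem map_intCast_mulVec_eq_zero_iff {α : Type*} {A : Matrix α ι ℤ} {u : ι → ℤ} :
    A.map (Int.cast : ℤ → ZMod p) *ᵥ (Int.cast ∘ u) = 0 ↔ ∀ i, (p : ℤ) ∣ (A *ᵥ u) i := by
  simp only [funext_iff, ← ZMod.intCast_zmod_eq_zero_iff_dvd]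
  exact forall_congr' fun i => by
    rw [Pi.zero_apply, ← eq_intCast (Int.castRingHom (ZMod p)), RingHom.map_mulVec]
    rfl

theorem one_le_dotProduct_self (hz : z ≠ 0) : 1 ≤ z ⬝ᵥ z :=
  Int.add_one_le_of_lt <|
    (Finset.sum_nonneg fun i _ => mul_self_nonneg (z i)).lt_of_ne'
      (dotProduct_self_eq_zero.not.2 hz)

theorem smul_dotProduct_smul_self (p : ℤ) (u : ι → ℤ) : p • u ⬝ᵥ p • u = p ^ 2 * (u ⬝ᵥ u) := by
  rw [smul_dotProduct, dotProduct_smul, smul_smul, smul_eq_mul, sq]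

theorem le_sq_mul_dotProduct_self {N : ℕ} (hN : N ≤ p ^ 4) {u : ι → ℤ} (hu : u ≠ 0)
    (hweight : (Int.cast ∘ u : ι → ZMod p) ≠ 0 →
      N ≤ p ^ 2 * hammingNorm (Int.cast ∘ u : ι → ZMod p)) :
    N ≤ (p : ℤ) ^ 2 * (u ⬝ᵥ u) := by
  by_cases hu_mod : (Int.cast ∘ u : ι → ZMod p) = 0
  · obtain ⟨w, rfl⟩ := intCast_comp_eq_zero_iff.1 hu_mod
    have hw : w ≠ 0 := by
      rintro rfl
      exact hu (smul_zero _)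
    calc (N : ℤ) ≤ p ^ 4 := by exact_mod_cast hN
      _ ≤ p ^ 4 * (w ⬝ᵥ w) := le_mul_of_one_le_right (by positivity) (one_le_dotProduct_self hw)
      _ = p ^ 2 * ((p : ℤ) • w ⬝ᵥ (p : ℤ) • w) := by rw [smul_dotProduct_smul_self]; ring
  · calc (N : ℤ) ≤ p ^ 2 * hammingNorm (Int.cast ∘ u : ι → ZMod p) := by
          exact_mod_cast hweight hu_mod
      _ ≤ p ^ 2 * (u ⬝ᵥ u) := by
          gcongr
          exact hammingNorm_intCast_le_dotProduct_self p u

theorem le_dotProduct_self_of_mem_codeModSq [NeZero p]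
    (hG : ∀ i j, (p : ℤ) ^ 2 ∣ (G * Gᵀ) i j) {N : ℕ} (hN : N ≤ p ^ 4)
    (hcode : ∀ a : κ → ZMod p, a ᵥ* G.map Int.cast ≠ 0 → N ≤ hammingNorm (a ᵥ* G.map Int.cast))
    (hdual : ∀ v : ι → ZMod p, v ≠ 0 → G.map Int.cast *ᵥ v = 0 → N ≤ p ^ 2 * hammingNorm v)
    (hz : z ∈ codeModSq p G) (hz_ne : z ≠ 0) : N ≤ z ⬝ᵥ z := by
  by_cases hz_mod : (Int.cast ∘ z : ι → ZMod p) = 0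
  · obtain ⟨u, rfl⟩ := intCast_comp_eq_zero_iff.1 hz_mod
    have hGu (i : κ) : (p : ℤ) ∣ (G *ᵥ u) i := (sq_dvd_mulVec_iff hG 0 u i).1 <| by
      rw [zero_vecMul, zero_add]
      exact sq_dvd_mulVec_of_mem_codeModSq hG hz i
    rw [smul_dotProduct_smul_self]
    exact le_sq_mul_dotProduct_self hN (right_ne_zero_of_smul hz_ne)
      fun hu_mod => hdual _ hu_mod (map_intCast_mulVec_eq_zero_iff.2 hGu)
  · obtain ⟨a, ha⟩ := exists_intCast_comp_eq_vecMul hz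
    calc (N : ℤ) ≤ hammingNorm (Int.cast ∘ z : ι → ZMod p) := by
          rw [ha] at hz_mod ⊢
          exact_mod_cast hcode a hz_mod
      _ ≤ z ⬝ᵥ z := hammingNorm_intCast_le_dotProduct_self p z

theorem hammingNorm_add_hammingNorm_one_add (v : ι → ZMod 2) :
    hammingNorm v + hammingNorm (1 + v) = Fintype.card ι := by
  have hne (i : ι) : (1 + v) i ≠ 0 ↔ ¬v i ≠ 0 := by
    rw [Pi.add_apply, Pi.one_apply]
    generalize v i = b
    revert b
    decide
  simp only [hammingNorm, hne]
  exact Finset.card_filter_add_card_filter_not _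

theorem le_dotProduct_self_of_sub_one_mem_codeModSq {N : ℕ}
    (hcode : ∀ a : κ → ZMod 2, hammingNorm (a ᵥ* G.map Int.cast) + N ≤ Fintype.card ι)
    (hz : z - 1 ∈ codeModSq 2 G) : N ≤ z ⬝ᵥ z := by
  obtain ⟨a, ha⟩ := exists_intCast_comp_eq_vecMul hz
  have hz_mod : (Int.cast ∘ z : ι → ZMod 2) = 1 + a ᵥ* G.map Int.cast := by
    rw [← ha]
    ext i
    simp
  have hle := hammingNorm_intCast_le_dotProduct_self 2 z
  have hcard := hammingNorm_add_hammingNorm_one_add (a ᵥ* G.map Int.cast)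
  rw [hz_mod] at hle
  have := hcode a
  omega

theorem four_le_hammingNorm_of_mulVec_eq_zero {α : Type*} {A : Matrix α ι (ZMod 2)}
    (hinj : Function.Injective A.col) (hsum : ∀ i j k, A.col i + A.col j ≠ A.col k)
    {v : ι → ZMod 2} (hv : v ≠ 0) (hAv : A *ᵥ v = 0) : 4 ≤ hammingNorm v := by
  classical
  have hsupport : ∑ j with v j ≠ 0, A.col j = 0 := by
    rw [← hAv, mulVec_eq_sum, Finset.sum_filter]
    refine Finset.sum_congr rfl fun j _ => ?_
    split_ifs with hj
    · have hj_one : v j = 1 := Fin.eq_one_of_ne_zero _ hj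
      rw [hj_one, MulOpposite.op_one, one_smul]
      rfl
    · simp [not_not.1 hj]
  have hpos : hammingNorm v ≠ 0 := hammingNorm_ne_zero_iff.2 hv
  rw [hammingNorm] at hpos ⊢
  generalize Finset.univ.filter (fun j => v j ≠ 0) = s at *
  by_contra! hlt
  obtain h | h | h : s.card = 1 ∨ s.card = 2 ∨ s.card = 3 := by omega
  · obtain ⟨j, rfl⟩ := Finset.card_eq_one.1 h
    rw [Finset.sum_singleton] at hsupport
    exact hsum j j j (by simp [hsupport])
  · obtain ⟨i, j, hij, rfl⟩ := Finset.card_eq_two.1 h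
    rw [Finset.sum_pair hij, ← ZModModule.sub_eq_add, sub_eq_zero] at hsupport
    exact hij (hinj hsupport)
  · obtain ⟨i, j, k, hij, hik, hjk, rfl⟩ := Finset.card_eq_three.1 h
    rw [Finset.sum_insert (by simp [hij, hik]), Finset.sum_pair hjk, ← add_assoc,
      ← ZModModule.sub_eq_add, sub_eq_zero] at hsupport
    exact hsum i j k hsupport

end MinimumNorm

section BitMask

variable {n : ℕ}

/-- The natural number whose binary digits are the coordinates of a binary vector. It lets the
kernel add and compare binary vectors with its built-in arithmetic. -/
def bitMask (v : Fin n → ZMod 2) : ℕ :=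
  Nat.ofBits fun k => decide (v k ≠ 0)

theorem testBit_bitMask (v : Fin n → ZMod 2) (k : Fin n) :
    (bitMask v).testBit k = decide (v k ≠ 0) :=
  Nat.testBit_ofBits_lt _ _ k.2

theorem bitMask_zero : bitMask (0 : Fin n → ZMod 2) = 0 := by
  refine Nat.eq_of_testBit_eq fun k => ?_
  rw [bitMask, Nat.zero_testBit]
  rcases lt_or_ge k n with hk | hk
  · rw [Nat.testBit_ofBits_lt _ _ hk]
    rfl
  · exact Nat.testBit_ofBits_ge _ _ hk

theorem bitMask_add (v w : Fin n → ZMod 2) : bitMask (v + w) = bitMask v ^^^ bitMask w := by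
  have hadd (a b : ZMod 2) : decide (a + b ≠ 0) = (decide (a ≠ 0) ^^ decide (b ≠ 0)) := by
    revert a b
    decide
  refine Nat.eq_of_testBit_eq fun k => ?_
  rw [Nat.testBit_xor]
  rcases lt_or_ge k n with hk | hk
  · simp only [bitMask, Nat.testBit_ofBits_lt _ _ hk]
    exact hadd _ _
  · simp only [bitMask, Nat.testBit_ofBits_ge _ _ hk, Bool.xor_false]

theorem hammingNorm_eq_count_testBit (v : Fin n → ZMod 2) :
    hammingNorm v = Nat.count (fun k => (bitMask v).testBit k) n := by
  rw [Nat.count_eq_card_filter_range, hammingNorm, Finset.card_filter, Finset.card_filter,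
    Finset.sum_range]
  simp only [testBit_bitMask, decide_eq_true_eq]

/-- All sums, with respect to bitwise exclusive or, of sublists of a list. -/
def xorSums : List ℕ → List ℕ
  | [] => [0]
  | a :: l => xorSums l ++ (xorSums l).map (a ^^^ ·)

theorem bitMask_mem_xorSums (l : List (Fin n → ZMod 2)) {v : Fin n → ZMod 2}
    (hv : v ∈ Submodule.span (ZMod 2) {x | x ∈ l}) : bitMask v ∈ xorSums (l.map bitMask) := by
  induction l generalizing v with
  | nil =>
    obtain rfl : v = 0 := by simpa using hv
    simp [bitMask_zero, xorSums]
  | cons x l ih =>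
    have hset : {y | y ∈ x :: l} = insert x {y | y ∈ l} := by
      ext y
      simp
    rw [hset, Submodule.mem_span_insert] at hv
    obtain ⟨c, w, hw, rfl⟩ := hv
    rw [List.map_cons, xorSums, List.mem_append, List.mem_map]
    obtain rfl | hc := eq_or_ne c 0
    · left
      rw [zero_smul, zero_add]
      exact ih hw
    · right
      refine ⟨bitMask w, ih hw, ?_⟩
      rw [show c = 1 from Fin.eq_one_of_ne_zero c hc, one_smul, bitMask_add]

end BitMask

section Example

/-- The supports of the first rows of four circulant binary `11 × 11` matrices, found by computer
search. -/
def circulantSupport : Fin 4 → Finset (Fin 11) :=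
  ![{0, 1, 2, 3}, {0, 1, 2, 3, 5, 6}, {0, 1, 2, 4, 7, 8}, {0, 1, 2, 3, 4, 6, 7, 8}]

/-- The first ten rows of four circulant matrices side by side. Modulo 2 the eleventh row is the sum
of these, as the matrices have rows of even weight. -/
def quasiCyclicGen : Matrix (Fin 10) (Fin 44) ℤ := fun i k =>
  let (block, j) : Fin 4 × Fin 11 := finProdFinEquiv.symm k
  if j - i.castSucc ∈ circulantSupport block then 1 else 0

/-- The reduction of `quasiCyclicGen` modulo 2. -/
def binaryQuasiCyclicGen : Matrix (Fin 10) (Fin 44) (ZMod 2) :=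
  quasiCyclicGen.map Int.cast

theorem four_dvd_quasiCyclicGen_mul_transpose :
    ∀ i j, 4 ∣ (quasiCyclicGen * quasiCyclicGenᵀ) i j := by
  decide +kernel

theorem eight_dvd_quasiCyclicGen_mul_transpose_diag :
    ∀ i, 8 ∣ (quasiCyclicGen * quasiCyclicGenᵀ) i i := by
  decide +kernel

theorem four_dvd_quasiCyclicGen_mulVec_one : ∀ i, 4 ∣ (quasiCyclicGen *ᵥ 1) i := by
  decide +kernel

theorem count_testBit_mem_of_mem_xorSums_binaryQuasiCyclicGen :
    ∀ w ∈ xorSums ((List.ofFn binaryQuasiCyclicGen).map bitMask),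
      Nat.count (fun k => w.testBit k) 44 ∈ [0, 16, 20, 24, 28] := by
  decide +kernel

theorem hammingNorm_vecMul_binaryQuasiCyclicGen_mem (a : Fin 10 → ZMod 2) :
    hammingNorm (a ᵥ* binaryQuasiCyclicGen) ∈ [0, 16, 20, 24, 28] := by
  have hspan : a ᵥ* binaryQuasiCyclicGen ∈
      Submodule.span (ZMod 2) {x | x ∈ List.ofFn binaryQuasiCyclicGen} := by
    rw [vecMul_eq_sum]
    exact Submodule.sum_mem _ fun i _ =>
      Submodule.smul_mem _ _ (Submodule.subset_span (List.mem_ofFn.2 ⟨i, rfl⟩))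
  rw [hammingNorm_eq_count_testBit]
  exact count_testBit_mem_of_mem_xorSums_binaryQuasiCyclicGen _ (bitMask_mem_xorSums _ hspan)

theorem injective_col_binaryQuasiCyclicGen : Function.Injective binaryQuasiCyclicGen.col := by
  unfold Function.Injective
  decide +kernel

theorem bitMask_col_xor_bitMask_col_ne : ∀ i j k, bitMask (binaryQuasiCyclicGen.col i) ^^^
    bitMask (binaryQuasiCyclicGen.col j) ≠ bitMask (binaryQuasiCyclicGen.col k) := by
  decide +kernel

theorem four_le_hammingNorm_of_binaryQuasiCyclicGen_mulVec_eq_zero {v : Fin 44 → ZMod 2}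
    (hv : v ≠ 0) (hGv : binaryQuasiCyclicGen *ᵥ v = 0) : 4 ≤ hammingNorm v :=
  four_le_hammingNorm_of_mulVec_eq_zero injective_col_binaryQuasiCyclicGen
    (fun i j k h => bitMask_col_xor_bitMask_col_ne i j k (by rw [← bitMask_add, h])) hv hGv

/-- The preimage in `ℤ⁴⁴` of the quaternary code generated by the rows of `quasiCyclicGen` and by
twice the dual of the binary code which they span. -/
def quaternaryCode : Set (Fin 44 → ℤ) :=
  codeModSq 2 quasiCyclicGen

variable {z : Fin 44 → ℤ}

theorem isSelfDualMod_quaternaryCode : IsSelfDualMod 4 quaternaryCode :=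
  isSelfDualMod_codeModSq (p := 2) four_dvd_quasiCyclicGen_mul_transpose

theorem eight_dvd_dotProduct_self_sub_of_mem_quaternaryCode (hz : z ∈ quaternaryCode) :
    8 ∣ z ⬝ᵥ z - 2 * (1 ⬝ᵥ z) :=
  eight_dvd_dotProduct_self_sub four_dvd_quasiCyclicGen_mul_transpose
    eight_dvd_quasiCyclicGen_mul_transpose_diag four_dvd_quasiCyclicGen_mulVec_one hz

theorem sixteen_le_dotProduct_self_of_mem_quaternaryCode (hz : z ∈ quaternaryCode) (hz_ne : z ≠ 0) :
    16 ≤ z ⬝ᵥ z := by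
  refine le_dotProduct_self_of_mem_codeModSq (N := 16) four_dvd_quasiCyclicGen_mul_transpose le_rfl
    (fun a ha => ?_) (fun v hv hGv => ?_) hz hz_ne <;> rw [← binaryQuasiCyclicGen] at *
  · have hweight := hammingNorm_vecMul_binaryQuasiCyclicGen_mem a
    have hpos : hammingNorm (a ᵥ* binaryQuasiCyclicGen) ≠ 0 := hammingNorm_ne_zero_iff.2 ha
    simp only [List.mem_cons, List.not_mem_nil, or_false] at hweight
    omega
  · have := four_le_hammingNorm_of_binaryQuasiCyclicGen_mulVec_eq_zero hv hGv
    omega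

theorem sixteen_le_dotProduct_self_of_sub_one_mem_quaternaryCode (hz : z - 1 ∈ quaternaryCode) :
    16 ≤ z ⬝ᵥ z := by
  refine le_dotProduct_self_of_sub_one_mem_codeModSq (N := 16) (fun a => ?_) hz
  have hweight := hammingNorm_vecMul_binaryQuasiCyclicGen_mem a
  rw [← binaryQuasiCyclicGen, Fintype.card_fin]
  simp only [List.mem_cons, List.not_mem_nil, or_false] at hweight
  omega

/-- The unimodular lattice obtained from `quaternaryCode` by Construction A. -/
def quaternaryLattice : Set (EuclideanSpace ℝ (Fin 44)) :=
  constructionA 4 quaternaryCode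

theorem isUnimodularLattice_quaternaryLattice : IsUnimodularLattice quaternaryLattice :=
  isSelfDualMod_quaternaryCode.isUnimodularLattice_constructionA

theorem isOddLattice_quaternaryLattice : IsOddLattice quaternaryLattice := by
  let u : Fin 44 → ℤ := fun k => if k < 11 then 1 else 0
  have hu : ∀ i, ((2 : ℕ) : ℤ) ∣ (quasiCyclicGen *ᵥ u) i := by
    decide +kernel
  have hnorm : (2 : ℤ) • u ⬝ᵥ (2 : ℤ) • u = 44 := by
    decide +kernel
  refine ⟨_, ⟨_, smul_mem_codeModSq hu, rfl⟩, 11, by decide, ?_⟩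
  rw [normOf_scaledVector, Nat.cast_ofNat, hnorm]
  norm_num

theorem hasMinNorm_quaternaryLattice : HasMinNorm quaternaryLattice 4 :=
  isSelfDualMod_quaternaryCode.hasMinNorm_constructionA
    fun _ hz hz_ne => sixteen_le_dotProduct_self_of_mem_quaternaryCode hz hz_ne

theorem mem_shadow_quaternaryLattice_iff {y : EuclideanSpace ℝ (Fin 44)} :
    y ∈ shadow quaternaryLattice ↔ ∃ z, z - 1 ∈ quaternaryCode ∧ scaledVector 4 z = y :=
  mem_shadow_constructionA_iff isSelfDualMod_quaternaryCode
    (fun _ => eight_dvd_dotProduct_self_sub_of_mem_quaternaryCode) isOddLattice_quaternaryLattice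

theorem exists_normOf_eq_of_mem_shadow_quaternaryLattice {y : EuclideanSpace ℝ (Fin 44)}
    (hy : y ∈ shadow quaternaryLattice) : ∃ k : ℤ, normOf y = 11 + 2 * (k : ℝ) := by
  have hchar : IsCharacteristic quaternaryLattice (scaledVector 4 (2 • 1)) :=
    isCharacteristic_scaledVector fun _ => eight_dvd_dotProduct_self_sub_of_mem_quaternaryCode
  obtain ⟨k, hk⟩ := hchar.exists_normOf_eq_of_mem_shadow isUnimodularLattice_quaternaryLattice hy
  have hone : (2 • 1 : Fin 44 → ℤ) ⬝ᵥ 2 • 1 = 176 := by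
    decide +kernel
  rw [normOf_scaledVector, hone] at hk
  exact ⟨k, by rw [hk]; norm_num⟩

theorem five_le_normOf_of_mem_shadow_quaternaryLattice {y : EuclideanSpace ℝ (Fin 44)}
    (hy : y ∈ shadow quaternaryLattice) : 5 ≤ normOf y := by
  have four_le_normOf : 4 ≤ normOf y := by
    obtain ⟨z, hz, rfl⟩ := mem_shadow_quaternaryLattice_iff.1 hy
    have hz_norm : (16 : ℝ) ≤ (z ⬝ᵥ z : ℤ) := by
      exact_mod_cast sixteen_le_dotProduct_self_of_sub_one_mem_quaternaryCode hz
    rw [normOf_scaledVector, Nat.cast_ofNat]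
    linarith
  obtain ⟨k, hk⟩ := exists_normOf_eq_of_mem_shadow_quaternaryLattice hy
  rw [hk] at four_le_normOf ⊢
  have hk_ge : 4 ≤ 11 + 2 * k := by exact_mod_cast four_le_normOf
  have : 5 ≤ 11 + 2 * k := by omega
  exact_mod_cast this

theorem hasShadowMinNorm_quaternaryLattice : HasShadowMinNorm quaternaryLattice 5 := by
  constructor
  · refine ⟨_, mem_shadow_quaternaryLattice_iff.2 ⟨1 - quasiCyclicGen 0, ?_, rfl⟩, ?_⟩
    · rw [sub_sub_cancel_left]
      exact isSelfDualMod_quaternaryCode.neg_mem (row_mem_codeModSq 2 quasiCyclicGen 0)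
    · have hnorm : (1 - quasiCyclicGen 0) ⬝ᵥ (1 - quasiCyclicGen 0) = 20 := by
        decide +kernel
      rw [normOf_scaledVector, hnorm]
      norm_num
  · rintro _ ⟨y, hy, rfl⟩
    exact five_le_normOf_of_mem_shadow_quaternaryLattice hy

end Example

theorem exists_unimodular_dim44_min4_sigma20 :
    ∃ L : Set (EuclideanSpace ℝ (Fin 44)),
      IsUnimodularLattice L ∧ IsOddLattice L ∧ HasMinNorm L 4 ∧ HasSigma L 20 :=
  ⟨quaternaryLattice, isUnimodularLattice_quaternaryLattice, isOddLattice_quaternaryLattice,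
    hasMinNorm_quaternaryLattice, 5, hasShadowMinNorm_quaternaryLattice, by norm_num⟩
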